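/- Let K ≥ 2 and let 0 = h_1 < h_2 < ... < h_K be the possible channel-gain magnitudes, let 0 < g_min ≤ g_max be reals, let η ∈ (0,1), and let N : {h_1,...,h_K} × [0, g_max] → [0,∞) satisfy: N(h_1, g) = 0 and N(h_k, 0) = 0 for all k and g; for each k ≥ 2, N(h_k, ·) is strictly increasing, continuous, and strictly convex on [0, g_max]; and N(h_k, g) ≤ N(h_{k'}, g) whenever k ≤ k'. For each number of users n and each user i ∈ {1,...,n}, let π_i be a probability mass function on {h_1,...,h_K} with π_i(h_1) < 1 − η, and let Ḡ_i satisfy g_min ≤ Ḡ_i and 0 < Ḡ_i < g_max · Σ_{k≥2} π_i(h_k). Then there exists a positive integer N* depending only on η, g_min, g_max and the function N (not on n, the π_i's or the Ḡ_i's) such that for every n ≥ N*, the product policy (F*_1, ..., F*_n) — where for user i, τ_i is the unique index with g_max·Σ_{k>τ_i} π_i(h_k) ≤ Ḡ_i < g_max·Σ_{k≥τ_i} π_i(h_k), F*_{i,k} is the Dirac measure at g_max for k > τ_i, F*_{i,k} is the Dirac measure at 0 for k < τ_i, and F*_{i,τ_i} = w_i·δ_{g_max} + (1 − w_i)·δ_0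 with w_i = (Ḡ_i − g_max·Σ_{k>τ_i} π_i(h_k))/(g_max·π_i(h_{τ_i})) — maximizes the objective T(F_1,...,F_n) = Σ_{(k_1,...,k_n)} Π_i π_i(h_{k_i}) ∫...∫ (1/2)·ln(1 + Σ_{i=1}^n N(h_{k_i}, g_i)) dF_{1,k_1}(g_1)...dF_{n,k_n}(g_n) over all feasible policies, i.e., over all families (F_{i,k})_{i≤n, k≤K} of Borel probability measures on [0, g_max] satisfying the per-user power constraints Σ_{k=1}^K π_i(h_k) ∫_0^{g_max} g dF_{i,k}(g) ≤ Ḡ_i for every i. -/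

import Mathlib

open MeasureTheory Finset

/-!
Users are switched to on/off signalling one at a time, the others acting as interference of total
entropy power `S`. Against any interference, an entropy power `x` is worth at least
`log (1 + x) * E[1 / (1 + S)]` and at most `x * E[1 / (1 + S)]`, so a user whose mean entropy power
is small gains by switching whatever the others do. Once every mean is at least a fixed `ε`, the sum
`S` is of order `n` outside an event of exponentially small probability. The curvature of
`x ↦ E[log (1 + x + S)]` is then of order `1 / n ^ 2`, while the strict convexity of `N k` makes an
intermediate power fall short of its on/off randomization by an entropy power bounded below, worth
order `1 / n`. For large `n` on/off signalling wins, and choosing the probabilities of transmitting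
is a fractional knapsack problem, which is solved greedily from the best channel states down.
-/

lemma log_add_le_log_add_div {a x : ℝ} (ha : 0 < a) (hax : 0 < a + x) :
    Real.log (a + x) ≤ Real.log a + x / a := by
  have tangent := Real.log_le_sub_one_of_pos (div_pos hax ha)
  rw [Real.log_div hax.ne' ha.ne', add_div, div_self ha.ne'] at tangent
  linarith

lemma log_add_log_one_add_div_le {a x : ℝ} (ha : 1 ≤ a) (hx : 0 ≤ x) :
    Real.log a + Real.log (1 + x) / a ≤ Real.log (a + x) := by
  have ha0 : 0 < a := by linarith
  have bernoulli : 1 + a * (x / a) ≤ (1 + x / a) ^ a :=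
    one_add_mul_self_le_rpow_one_add (by linarith [div_nonneg hx ha0.le]) ha
  have hlog : Real.log (1 + x) ≤ a * Real.log (1 + x / a) := by
    rw [← Real.log_rpow (by positivity)]
    rw [mul_div_cancel₀ x ha0.ne'] at bernoulli
    exact Real.log_le_log (by linarith) bernoulli
  calc Real.log a + Real.log (1 + x) / a
      ≤ Real.log a + Real.log (1 + x / a) := by
        gcongr
        rwa [div_le_iff₀' ha0]
    _ = Real.log (a * (1 + x / a)) := (Real.log_mul ha0.ne' (by positivity)).symm
    _ = Real.log (a + x) := by rw [mul_add, mul_one, mul_div_cancel₀ x ha0.ne']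

-- All tangents are taken at `a + t * y`. The deficit of `x` gains a multiple of `1 / a`, whereas
-- the curvature of `log` costs only a multiple of `1 / a ^ 2`.
lemma log_add_le_chord_add {a t x y c : ℝ} (ha : 0 < a) (ht : t ∈ Set.Icc 0 1) (hx : 0 ≤ x)
    (hy : 0 ≤ y) (hc : 0 ≤ c) (hxy : x ≤ t * y - c * (t * (1 - t))) :
    Real.log (a + x) ≤ (1 - t) * Real.log a + t * Real.log (a + y)
      + t * (1 - t) * (y ^ 2 / a ^ 2 - c / (a + y)) := by
  obtain ⟨ht0, ht1⟩ := ht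
  have hs : 0 ≤ t * (1 - t) := mul_nonneg ht0 (by linarith)
  have hty : t * y ≤ y := mul_le_of_le_one_left hy ht1
  set b := a + t * y with hb
  have hab : a ≤ b := le_add_of_nonneg_right (mul_nonneg ht0 hy)
  have hb0 : 0 < b := ha.trans_le hab
  have upper : Real.log (a + x) ≤ Real.log b - t * (1 - t) * (c / (a + y)) :=
    calc Real.log (a + x) = Real.log (b + (x - t * y)) := by rw [hb]; ring_nf
      _ ≤ Real.log b + (x - t * y) / b := log_add_le_log_add_div hb0 (by linarith)
      _ ≤ Real.log b + -(c * (t * (1 - t))) / b := by gcongr; linarith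
      _ = Real.log b - c * (t * (1 - t)) / b := by ring
      _ ≤ Real.log b - c * (t * (1 - t)) / (a + y) := by gcongr; linarith
      _ = Real.log b - t * (1 - t) * (c / (a + y)) := by ring
  have left : Real.log b ≤ Real.log a + t * y / a := log_add_le_log_add_div ha hb0
  have right : Real.log b ≤ Real.log (a + y) - (1 - t) * y / (a + y) := by
    have := log_add_le_log_add_div (a := a + y) (x := t * y - y) (by linarith) (by linarith)
    calc Real.log b = Real.log (a + y + (t * y - y)) := by rw [hb]; ring_nf
      _ ≤ Real.log (a + y) + (t * y - y) / (a + y) := this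
      _ = Real.log (a + y) - (1 - t) * y / (a + y) := by ring
  have curvature : y / a - y / (a + y) ≤ y ^ 2 / a ^ 2 :=
    calc y / a - y / (a + y) = y ^ 2 / (a * (a + y)) := by field_simp; ring
      _ ≤ y ^ 2 / a ^ 2 := by gcongr; nlinarith
  linear_combination upper + (1 - t) * left + t * right + mul_le_mul_of_nonneg_left curvature hs

lemma one_div_one_add_sq_le {b s : ℝ} (hb : 0 < b) (hs : 0 ≤ s) :
    1 / (1 + s) ^ 2 ≤ 1 / b ^ 2 + Real.exp b * Real.exp (-s) := by
  rw [← Real.exp_add]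
  rcases le_total b (1 + s) with hbs | hsb
  · calc 1 / (1 + s) ^ 2 ≤ 1 / b ^ 2 := by gcongr
      _ ≤ 1 / b ^ 2 + Real.exp (b + -s) := le_add_of_nonneg_right (Real.exp_nonneg _)
  · calc 1 / (1 + s) ^ 2 ≤ 1 := div_le_one_of_le₀ (by nlinarith) (by positivity)
      _ ≤ Real.exp (b + -s) := Real.one_le_exp (by linarith)
      _ ≤ 1 / b ^ 2 + Real.exp (b + -s) := le_add_of_nonneg_left (by positivity)

lemma exp_neg_le_two_div_sq {b : ℝ} (hb : 0 < b) : Real.exp (-b) ≤ 2 / b ^ 2 := by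
  rw [Real.exp_neg, inv_le_comm₀ (Real.exp_pos b) (by positivity), inv_div]
  linarith [Real.quadratic_le_exp_of_nonneg hb.le]

lemma exp_neg_le_chord {M x : ℝ} (hM : 0 < M) (hx : x ∈ Set.Icc 0 M) :
    Real.exp (-x) ≤ 1 - (1 - Real.exp (-M)) / M * x := by
  have hconv := convexOn_exp.2 (Set.mem_univ 0) (Set.mem_univ (-M))
    (sub_nonneg.2 (div_le_one_of_le₀ hx.2 hM.le)) (div_nonneg hx.1 hM.le) (sub_add_cancel 1 (x / M))
  simp only [smul_eq_mul, mul_zero, zero_add, Real.exp_zero, mul_neg,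
    div_mul_cancel₀ x hM.ne'] at hconv
  linear_combination hconv

lemma exists_forall_inv_sq_le_inv {M c θ : ℝ} (hM : 0 < M) (hc : 0 < c) (hθ : 0 < θ) :
    ∃ m₀ : ℕ, 0 < m₀ ∧ ∀ m : ℕ, m₀ ≤ m →
      M ^ 2 * (3 / (θ * m) ^ 2) ≤ c / (1 + m * M + M) := by
  obtain ⟨m₀, hm₀⟩ := exists_nat_ge (3 * M ^ 2 * (1 + 2 * M) / (c * θ ^ 2))
  refine ⟨m₀ + 1, m₀.succ_pos, fun m hm => ?_⟩
  have hm1 : (1 : ℝ) ≤ m := by exact_mod_cast m₀.succ_pos.trans_le hm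
  have hlarge : 3 * M ^ 2 * (1 + 2 * M) / (c * θ ^ 2) ≤ m :=
    hm₀.trans (by exact_mod_cast (m₀.le_succ.trans hm))
  calc M ^ 2 * (3 / (θ * m) ^ 2)
      = c / (m * (1 + 2 * M)) * (3 * M ^ 2 * (1 + 2 * M) / (c * θ ^ 2) / m) := by field_simp
    _ ≤ c / (m * (1 + 2 * M)) * 1 := by
        gcongr
        exact div_le_one_of_le₀ hlarge (by positivity)
    _ ≤ c / (1 + m * M + M) := by
        rw [mul_one]
        gcongr
        nlinarith

lemma exists_pos_forall_le {ι : Type*} [Finite ι] {f : ι → ℝ} {q : ι → Prop}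
    (hf : ∀ k, q k → 0 < f k) : ∃ c > 0, ∀ k, q k → c ≤ f k := by
  classical
  cases nonempty_fintype ι
  rcases (univ.filter q).eq_empty_or_nonempty with hempty | hne
  · exact ⟨1, one_pos, fun k hk => by simpa [hempty] using mem_filter.2 ⟨mem_univ k, hk⟩⟩
  · obtain ⟨k₀, hk₀, hmin⟩ := exists_min_image _ f hne
    exact ⟨f k₀, hf k₀ (mem_filter.1 hk₀).2, fun k hk => hmin k (mem_filter.2 ⟨mem_univ k, hk⟩)⟩

section Convexity

variable {f : ℝ → ℝ} {G : ℝ}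

lemma convexOn_apply_mul_le (hf : ConvexOn ℝ (Set.Icc 0 G) f) (hf0 : f 0 = 0) {t g : ℝ}
    (ht : t ∈ Set.Icc 0 1) (hg : g ∈ Set.Icc 0 G) : f (t * g) ≤ t * f g := by
  have hconv := hf.2 (Set.left_mem_Icc.2 (hg.1.trans hg.2)) hg (sub_nonneg.2 ht.2) ht.1
    (sub_add_cancel 1 t)
  simpa [hf0] using hconv

lemma monotoneOn_of_convexOn_of_nonneg (hf : ConvexOn ℝ (Set.Icc 0 G) f) (hf0 : f 0 = 0)
    (hnonneg : ∀ g ∈ Set.Icc 0 G, 0 ≤ f g) : MonotoneOn f (Set.Icc 0 G) := by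
  intro x hx y hy hxy
  rcases hx.1.eq_or_lt with rfl | hx0
  · rw [hf0]
    exact hnonneg y hy
  · have hy0 : 0 < y := hx0.trans_le hxy
    have ht : x / y ∈ Set.Icc 0 1 := ⟨by positivity, div_le_one_of_le₀ hxy hy0.le⟩
    calc f x = f (x / y * y) := by rw [div_mul_cancel₀ x hy0.ne']
      _ ≤ x / y * f y := convexOn_apply_mul_le hf hf0 ht hy
      _ ≤ f y := mul_le_of_le_one_left (hnonneg y hy) ht.2

lemma convexOn_apply_mul_le_sub (hf : ConvexOn ℝ (Set.Icc 0 G) f) (hf0 : f 0 = 0) (hG : 0 ≤ G)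
    {t : ℝ} (ht : t ∈ Set.Icc 0 1) :
    f (t * G) ≤ t * f G - (f G - 2 * f (G / 2)) * (t * (1 - t)) := by
  obtain ⟨ht0, ht1⟩ := ht
  have hGmem : G ∈ Set.Icc 0 G := Set.right_mem_Icc.2 hG
  have hhalf : G / 2 ∈ Set.Icc 0 G := ⟨by linarith, by linarith⟩
  have hgap : 0 ≤ f G - 2 * f (G / 2) := by
    have := convexOn_apply_mul_le hf hf0 (t := 1 / 2) ⟨by norm_num, by norm_num⟩ hGmem
    rw [one_div_mul_eq_div] at this
    linarith
  rcases le_total t (1 / 2) with hle | hge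
  · have := convexOn_apply_mul_le hf hf0 (t := 2 * t) ⟨by linarith, by linarith⟩ hhalf
    rw [show 2 * t * (G / 2) = t * G by ring] at this
    nlinarith [mul_nonneg hgap (sq_nonneg t)]
  · have := hf.2 hhalf hGmem (show 0 ≤ 2 * (1 - t) by linarith) (show 0 ≤ 2 * t - 1 by linarith)
      (by ring)
    simp only [smul_eq_mul] at this
    rw [show 2 * (1 - t) * (G / 2) + (2 * t - 1) * G = t * G by ring] at this
    nlinarith [mul_nonneg hgap (sq_nonneg (1 - t))]

end Convexity

/-- `μ` is a probability law on the interval `[0, M]`. Laws are carried as measures on all of `ℝ`,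
so that sums of independent users need no coercions between intervals. -/
structure IsBoundedLaw (M : ℝ) (μ : Measure ℝ) : Prop extends IsProbabilityMeasure μ where
  ae_mem : ∀ᵐ x ∂μ, x ∈ Set.Icc 0 M

/-- The law of the sum of independent random variables with laws `ρ i`. -/
noncomputable def sumLaw {ι : Type*} [Fintype ι] (ρ : ι → Measure ℝ) : Measure ℝ :=
  (Measure.pi ρ).map fun x => ∑ i, x i

namespace IsBoundedLaw

variable {M : ℝ} {μ : Measure ℝ} {f : ℝ → ℝ}

lemma restrict_eq (hμ : IsBoundedLaw M μ) : μ.restrict (Set.Icc 0 M) = μ :=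
  Measure.restrict_eq_self_of_ae_mem hμ.ae_mem

lemma integrable_of_continuousOn (hμ : IsBoundedLaw M μ) (hf : ContinuousOn f (Set.Icc 0 M)) :
    Integrable f μ := by
  have := hμ.toIsProbabilityMeasure
  have hint : IntegrableOn f (Set.Icc 0 M) μ := hf.integrableOn_Icc
  rwa [IntegrableOn, hμ.restrict_eq] at hint

lemma integrable_of_monotoneOn (hμ : IsBoundedLaw M μ) (hf : MonotoneOn f (Set.Icc 0 M)) :
    Integrable f μ := by
  have := hμ.toIsProbabilityMeasure
  have hint : IntegrableOn f (Set.Icc 0 M) μ := hf.integrableOn_isCompact isCompact_Icc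
  rwa [IntegrableOn, hμ.restrict_eq] at hint

lemma aemeasurable_of_monotoneOn (hμ : IsBoundedLaw M μ) (hf : MonotoneOn f (Set.Icc 0 M)) :
    AEMeasurable f μ := by
  rw [← hμ.restrict_eq]
  exact aemeasurable_restrict_of_monotoneOn measurableSet_Icc hf

lemma integrable_id (hμ : IsBoundedLaw M μ) : Integrable (fun x => x) μ :=
  hμ.integrable_of_continuousOn continuousOn_id

lemma integral_mono (hμ : IsBoundedLaw M μ) {g : ℝ → ℝ} (hf : Integrable f μ)
    (hg : Integrable g μ) (hfg : ∀ x ∈ Set.Icc 0 M, f x ≤ g x) : ∫ x, f x ∂μ ≤ ∫ x, g x ∂μ :=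
  integral_mono_ae hf hg (hμ.ae_mem.mono hfg)

lemma integral_div_mem_Icc (hμ : IsBoundedLaw M μ) (hM : 0 < M) :
    (∫ x, x ∂μ) / M ∈ Set.Icc 0 1 := by
  have := hμ.toIsProbabilityMeasure
  have hle : ∫ x, x ∂μ ≤ M := by
    simpa using hμ.integral_mono hμ.integrable_id (integrable_const M) fun x hx => hx.2
  exact ⟨div_nonneg (integral_nonneg_of_ae (hμ.ae_mem.mono fun x hx => hx.1)) hM.le,
    div_le_one_of_le₀ hle hM.le⟩

lemma map (hμ : IsBoundedLaw M μ) {L : ℝ} (hf : AEMeasurable f μ)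
    (hmaps : Set.MapsTo f (Set.Icc 0 M) (Set.Icc 0 L)) : IsBoundedLaw L (μ.map f) where
  toIsProbabilityMeasure :=
    have := hμ.toIsProbabilityMeasure
    Measure.isProbabilityMeasure_map hf
  ae_mem := (ae_map_iff hf measurableSet_Icc).2 (hμ.ae_mem.mono hmaps)

protected lemma sumLaw {ι : Type*} [Fintype ι] {ρ : ι → Measure ℝ}
    (hρ : ∀ i, IsBoundedLaw M (ρ i)) : IsBoundedLaw (Fintype.card ι * M) (sumLaw ρ) := by
  have := fun i => (hρ i).toIsProbabilityMeasure
  have hmeas : Measurable fun x : ι → ℝ => ∑ i, x i := by fun_prop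
  refine ⟨Measure.isProbabilityMeasure_map hmeas.aemeasurable,
    (ae_map_iff hmeas.aemeasurable measurableSet_Icc).2 ?_⟩
  have hcoord : ∀ᵐ x ∂Measure.pi ρ, ∀ i, x i ∈ Set.Icc 0 M :=
    ae_all_iff.2 fun i => Measure.tendsto_eval_ae_ae.eventually (hρ i).ae_mem
  filter_upwards [hcoord] with x hx
  refine ⟨sum_nonneg fun i _ => (hx i).1, ?_⟩
  simpa using sum_le_sum fun i (_ : i ∈ univ) => (hx i).2

end IsBoundedLaw

lemma integral_exp_neg_sumLaw {ι : Type*} [Fintype ι] (ρ : ι → Measure ℝ)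
    [∀ i, SigmaFinite (ρ i)] :
    ∫ s, Real.exp (-s) ∂sumLaw ρ = ∏ i, ∫ x, Real.exp (-x) ∂ρ i := by
  rw [sumLaw, integral_map (by fun_prop) (by fun_prop)]
  simp_rw [← sum_neg_distrib, Real.exp_sum]
  exact integral_fintype_prod_eq_prod fun _ x => Real.exp (-x)

lemma sumLaw_eq_conv {n : ℕ} (ρ : Fin (n + 1) → Measure ℝ) [∀ i, SigmaFinite (ρ i)]
    (i : Fin (n + 1)) : sumLaw ρ = ρ i ∗ sumLaw (i.removeNth ρ) := by
  have hsplit : (Measure.pi ρ).map (MeasurableEquiv.piFinSuccAbove (fun _ => ℝ) i) =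
      (ρ i).prod (Measure.pi (i.removeNth ρ)) := (measurePreserving_piFinSuccAbove ρ i).map_eq
  have : ∀ j, SigmaFinite (i.removeNth ρ j) := fun j => inferInstanceAs (SigmaFinite (ρ _))
  rw [Measure.conv, sumLaw, sumLaw, ← Measure.map_id (μ := ρ i),
    Measure.map_prod_map _ _ measurable_id (by fun_prop), ← hsplit,
    Measure.map_map (by fun_prop) (by fun_prop), Measure.map_map (by fun_prop) (by fun_prop)]
  congr 1 with x
  exact Fin.sum_univ_succAbove x i

/-- `E[log (1 + x + S)]` for `S` with law `P`: the rate, up to the factor `1 / 2`, of a user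
received with entropy power `x` among interferers whose total entropy power has law `P`. -/
noncomputable def expectedLog (P : Measure ℝ) (x : ℝ) : ℝ :=
  ∫ s, Real.log (1 + x + s) ∂P

section ExpectedLog

variable {L : ℝ} {P : Measure ℝ}

lemma integrable_log_one_add_add (hP : IsBoundedLaw L P) {x : ℝ} (hx : 0 ≤ x) :
    Integrable (fun s => Real.log (1 + x + s)) P :=
  hP.integrable_of_continuousOn <| ContinuousOn.log (by fun_prop) fun s hs => by
    have := hs.1
    positivity

lemma integrable_one_div_one_add_pow (hP : IsBoundedLaw L P) (m : ℕ) :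
    Integrable (fun s => 1 / (1 + s) ^ m) P :=
  hP.integrable_of_continuousOn <| ContinuousOn.div (by fun_prop) (by fun_prop) fun s hs => by
    have := hs.1
    positivity

lemma monotoneOn_expectedLog (hP : IsBoundedLaw L P) :
    MonotoneOn (expectedLog P) (Set.Ici 0) := by
  intro x hx y hy hxy
  refine hP.integral_mono (integrable_log_one_add_add hP hx) (integrable_log_one_add_add hP hy)
    fun s hs => ?_
  have hpos : 0 < 1 + x + s := by linarith [hs.1, Set.mem_Ici.1 hx]
  gcongr

lemma expectedLog_le_add_mul (hP : IsBoundedLaw L P) {x : ℝ} (hx : 0 ≤ x) :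
    expectedLog P x ≤ expectedLog P 0 + x * ∫ s, 1 / (1 + s) ∂P := by
  have hlog := integrable_log_one_add_add hP le_rfl
  have hinv : Integrable (fun s => x * (1 / (1 + s))) P := by
    simpa using (integrable_one_div_one_add_pow hP 1).const_mul x
  calc expectedLog P x ≤ ∫ s, Real.log (1 + 0 + s) + x * (1 / (1 + s)) ∂P := by
        refine hP.integral_mono (integrable_log_one_add_add hP hx) (hlog.add hinv) fun s hs => ?_
        have hs0 := hs.1
        have := log_add_le_log_add_div (a := 1 + s) (x := x) (by positivity) (by positivity)
        convert this using 2 <;> ring_nf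
    _ = expectedLog P 0 + x * ∫ s, 1 / (1 + s) ∂P := by
        rw [integral_add hlog hinv, integral_const_mul, expectedLog]

lemma add_log_mul_le_expectedLog (hP : IsBoundedLaw L P) {x : ℝ} (hx : 0 ≤ x) :
    expectedLog P 0 + Real.log (1 + x) * ∫ s, 1 / (1 + s) ∂P ≤ expectedLog P x := by
  have hlog := integrable_log_one_add_add hP le_rfl
  have hinv : Integrable (fun s => Real.log (1 + x) * (1 / (1 + s))) P := by
    simpa using (integrable_one_div_one_add_pow hP 1).const_mul (Real.log (1 + x))
  calc expectedLog P 0 + Real.log (1 + x) * ∫ s, 1 / (1 + s) ∂P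
      = ∫ s, Real.log (1 + 0 + s) + Real.log (1 + x) * (1 / (1 + s)) ∂P := by
        rw [integral_add hlog hinv, integral_const_mul, expectedLog]
    _ ≤ expectedLog P x := by
        refine hP.integral_mono (hlog.add hinv) (integrable_log_one_add_add hP hx) fun s hs => ?_
        have := log_add_log_one_add_div_le (a := 1 + s) (by linarith [hs.1]) hx
        convert this using 2 <;> ring_nf

lemma integral_expectedLog_le_of_integral_le_log (hP : IsBoundedLaw L P) {M M' : ℝ}
    {μ ν : Measure ℝ} (hμ : IsBoundedLaw M μ) (hν : IsBoundedLaw M' ν)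
    (hle : ∫ x, x ∂μ ≤ ∫ x, Real.log (1 + x) ∂ν) :
    ∫ x, expectedLog P x ∂μ ≤ ∫ x, expectedLog P x ∂ν := by
  have := hμ.toIsProbabilityMeasure
  have := hν.toIsProbabilityMeasure
  set C := ∫ s, 1 / (1 + s) ∂P
  have hC : 0 ≤ C := integral_nonneg_of_ae <| hP.ae_mem.mono fun s hs => by
    have := hs.1
    positivity
  have hmono (R : ℝ) : MonotoneOn (expectedLog P) (Set.Icc 0 R) :=
    (monotoneOn_expectedLog hP).mono Set.Icc_subset_Ici_self
  have hlog : Integrable (fun x => Real.log (1 + x)) ν := by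
    simpa using integrable_log_one_add_add hν le_rfl
  calc ∫ x, expectedLog P x ∂μ ≤ ∫ x, expectedLog P 0 + x * C ∂μ :=
        hμ.integral_mono (hμ.integrable_of_monotoneOn (hmono M))
          (hμ.integrable_of_continuousOn (by fun_prop)) fun x hx => expectedLog_le_add_mul hP hx.1
    _ = expectedLog P 0 + (∫ x, x ∂μ) * C := by
        rw [integral_add (integrable_const _) (hμ.integrable_id.mul_const C), integral_mul_const]
        simp
    _ ≤ expectedLog P 0 + (∫ x, Real.log (1 + x) ∂ν) * C := by gcongr
    _ = ∫ x, expectedLog P 0 + Real.log (1 + x) * C ∂ν := by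
        rw [integral_add (integrable_const _) (hlog.mul_const C), integral_mul_const]
        simp
    _ ≤ ∫ x, expectedLog P x ∂ν :=
        hν.integral_mono ((integrable_const _).add (hlog.mul_const C))
          (hν.integrable_of_monotoneOn (hmono M')) fun x hx => add_log_mul_le_expectedLog hP hx.1

lemma integral_one_div_one_add_sq_le (hP : IsBoundedLaw L P) {b : ℝ} (hb : 0 < b)
    (hexp : ∫ s, Real.exp (-s) ∂P ≤ Real.exp (-(2 * b))) :
    ∫ s, 1 / (1 + s) ^ 2 ∂P ≤ 3 / b ^ 2 := by
  have := hP.toIsProbabilityMeasure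
  have hint : Integrable (fun s => Real.exp b * Real.exp (-s)) P :=
    hP.integrable_of_continuousOn (by fun_prop)
  calc ∫ s, 1 / (1 + s) ^ 2 ∂P ≤ ∫ s, 1 / b ^ 2 + Real.exp b * Real.exp (-s) ∂P :=
        hP.integral_mono (integrable_one_div_one_add_pow hP 2) ((integrable_const _).add hint)
          fun s hs => one_div_one_add_sq_le hb hs.1
    _ = 1 / b ^ 2 + Real.exp b * ∫ s, Real.exp (-s) ∂P := by
        rw [integral_add (integrable_const _) hint, integral_const_mul]
        simp
    _ ≤ 1 / b ^ 2 + Real.exp b * Real.exp (-(2 * b)) := by gcongr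
    _ = 1 / b ^ 2 + Real.exp (-b) := by
        rw [← Real.exp_add]
        ring_nf
    _ ≤ 1 / b ^ 2 + 2 / b ^ 2 := by gcongr; exact exp_neg_le_two_div_sq hb
    _ = 3 / b ^ 2 := by ring

lemma integral_exp_neg_le {M ε : ℝ} (hM : 0 < M) {μ : Measure ℝ} (hμ : IsBoundedLaw M μ)
    (hε : ε ≤ ∫ x, x ∂μ) :
    ∫ x, Real.exp (-x) ∂μ ≤ Real.exp (-((1 - Real.exp (-M)) / M * ε)) := by
  have := hμ.toIsProbabilityMeasure
  set r := (1 - Real.exp (-M)) / M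
  have hr : 0 ≤ r := div_nonneg (by simpa using hM.le) hM.le
  calc ∫ x, Real.exp (-x) ∂μ ≤ ∫ x, 1 - r * x ∂μ :=
        hμ.integral_mono (hμ.integrable_of_continuousOn (by fun_prop))
          (hμ.integrable_of_continuousOn (by fun_prop)) fun x hx => exp_neg_le_chord hM hx
    _ = 1 - r * ∫ x, x ∂μ := by
        rw [integral_sub (integrable_const _) (hμ.integrable_id.const_mul r), integral_const_mul]
        simp
    _ ≤ 1 - r * ε := by gcongr
    _ ≤ Real.exp (-(r * ε)) := Real.one_sub_le_exp_neg _

lemma expectedLog_le_chord (hP : IsBoundedLaw L P) {M c t x y : ℝ} (hc : 0 ≤ c)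
    (hcurv : M ^ 2 * ∫ s, 1 / (1 + s) ^ 2 ∂P ≤ c / (1 + L + M)) (ht : t ∈ Set.Icc 0 1)
    (hx : 0 ≤ x) (hy : y ∈ Set.Icc 0 M) (hxy : x ≤ t * y - c * (t * (1 - t))) :
    expectedLog P x ≤ (1 - t) * expectedLog P 0 + t * expectedLog P y := by
  have := hP.toIsProbabilityMeasure
  have hweight : 0 ≤ t * (1 - t) := mul_nonneg ht.1 (sub_nonneg.2 ht.2)
  have hlog0 := (integrable_log_one_add_add hP le_rfl).const_mul (1 - t)
  have hlogy := (integrable_log_one_add_add hP hy.1).const_mul t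
  have hsq := (integrable_one_div_one_add_pow hP 2).const_mul (M ^ 2)
  have hends : Integrable (fun s => (1 - t) * Real.log (1 + 0 + s) + t * Real.log (1 + y + s)) P :=
    hlog0.add hlogy
  have hdiff : Integrable (fun s => M ^ 2 * (1 / (1 + s) ^ 2) - c / (1 + L + M)) P :=
    hsq.sub (integrable_const _)
  calc expectedLog P x
      ≤ ∫ s, (1 - t) * Real.log (1 + 0 + s) + t * Real.log (1 + y + s)
          + t * (1 - t) * (M ^ 2 * (1 / (1 + s) ^ 2) - c / (1 + L + M)) ∂P := by
        refine hP.integral_mono (integrable_log_one_add_add hP hx)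
          (hends.add (hdiff.const_mul _)) fun s hs => ?_
        have hs0 := hs.1
        have hy0 := hy.1
        have hchord := log_add_le_chord_add (a := 1 + s) (by positivity) ht hx hy0 hc hxy
        have hbound : y ^ 2 / (1 + s) ^ 2 - c / (1 + s + y)
            ≤ M ^ 2 * (1 / (1 + s) ^ 2) - c / (1 + L + M) := by
          rw [mul_one_div]
          gcongr
          exacts [hy.2, hs.2, hy.2]
        rw [add_right_comm 1 x, add_right_comm 1 y, add_zero]
        linear_combination hchord + mul_le_mul_of_nonneg_left hbound hweight
    _ = (1 - t) * expectedLog P 0 + t * expectedLog P y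
          + t * (1 - t) * (M ^ 2 * ∫ s, 1 / (1 + s) ^ 2 ∂P - c / (1 + L + M)) := by
        rw [integral_add hends (hdiff.const_mul _), integral_add hlog0 hlogy,
          integral_const_mul, integral_const_mul, integral_const_mul,
          integral_sub hsq (integrable_const _), integral_const_mul]
        simp [expectedLog]
    _ ≤ (1 - t) * expectedLog P 0 + t * expectedLog P y :=
        add_le_of_nonpos_right (mul_nonpos_of_nonneg_of_nonpos hweight (sub_nonpos.2 hcurv))

end ExpectedLog

/-- `Φ` values `x ≥ 0` monotonically, and never prefers `x` to the gamble paying `y ∈ [0, M]` with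
probability `t` and `0` otherwise when `x` falls short of the mean `t * y` by at least
`c * (t * (1 - t))`. Concave functions with a curvature small compared to `c` qualify. -/
structure IsUtility (M c : ℝ) (Φ : ℝ → ℝ) : Prop where
  monotoneOn : MonotoneOn Φ (Set.Ici 0)
  le_chord : ∀ {t x y : ℝ}, t ∈ Set.Icc 0 1 → 0 ≤ x → y ∈ Set.Icc 0 M →
    x ≤ t * y - c * (t * (1 - t)) → Φ x ≤ (1 - t) * Φ 0 + t * Φ y

/-- The integral stochastic order generated by `IsUtility M c`. -/
def UtilityLE (M c : ℝ) (μ ν : Measure ℝ) : Prop :=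
  ∀ Φ, IsUtility M c Φ → ∫ x, Φ x ∂μ ≤ ∫ x, Φ x ∂ν

section Exchange

variable {n : ℕ}

lemma expectedLog_sumLaw_zero {M : ℝ} {ρ : Fin (n + 1) → Measure ℝ}
    (hρ : ∀ i, IsBoundedLaw M (ρ i)) (i : Fin (n + 1)) :
    expectedLog (sumLaw ρ) 0 = ∫ x, expectedLog (sumLaw (i.removeNth ρ)) x ∂ρ i := by
  have := fun i => (hρ i).toIsProbabilityMeasure
  have : IsProbabilityMeasure (sumLaw (i.removeNth ρ)) :=
    (IsBoundedLaw.sumLaw fun j => hρ (i.succAbove j)).toIsProbabilityMeasure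
  have hint := integrable_log_one_add_add (IsBoundedLaw.sumLaw hρ) le_rfl
  rw [sumLaw_eq_conv ρ i] at hint
  rw [expectedLog, sumLaw_eq_conv ρ i, integral_conv hint]
  simp only [expectedLog, add_zero, add_assoc]

lemma expectedLog_sumLaw_le_update {M : ℝ} {ρ : Fin (n + 1) → Measure ℝ}
    (hρ : ∀ i, IsBoundedLaw M (ρ i)) (i : Fin (n + 1)) {ν : Measure ℝ} (hν : IsBoundedLaw M ν)
    (hle : ∫ x, expectedLog (sumLaw (i.removeNth ρ)) x ∂ρ i
      ≤ ∫ x, expectedLog (sumLaw (i.removeNth ρ)) x ∂ν) :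
    expectedLog (sumLaw ρ) 0 ≤ expectedLog (sumLaw (Function.update ρ i ν)) 0 := by
  have hupdate : ∀ j, IsBoundedLaw M (Function.update ρ i ν j) :=
    (Function.forall_update_iff ρ fun _ μ => IsBoundedLaw M μ).2 ⟨hν, fun j _ => hρ j⟩
  rw [expectedLog_sumLaw_zero hρ i, expectedLog_sumLaw_zero hupdate i]
  simpa using hle

lemma isUtility_expectedLog_sumLaw {M c ε : ℝ} {σ : Fin n → Measure ℝ} (hM : 0 < M) (hc : 0 ≤ c)
    (hε : 0 < ε) (hn : 0 < n) (hσ : ∀ j, IsBoundedLaw M (σ j)) (hmean : ∀ j, ε ≤ ∫ x, x ∂σ j)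
    (hlarge : M ^ 2 * (3 / ((1 - Real.exp (-M)) / M * ε / 2 * n) ^ 2) ≤ c / (1 + n * M + M)) :
    IsUtility M c (expectedLog (sumLaw σ)) := by
  have := fun j => (hσ j).toIsProbabilityMeasure
  have hsum : IsBoundedLaw (n * M) (sumLaw σ) := by simpa using IsBoundedLaw.sumLaw hσ
  set r := (1 - Real.exp (-M)) / M
  have hr : 0 < r := div_pos (by simpa using hM) hM
  have hexp : ∫ s, Real.exp (-s) ∂sumLaw σ ≤ Real.exp (-(2 * (r * ε / 2 * n))) :=
    calc ∫ s, Real.exp (-s) ∂sumLaw σ = ∏ j, ∫ x, Real.exp (-x) ∂σ j := integral_exp_neg_sumLaw σ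
      _ ≤ ∏ _j : Fin n, Real.exp (-(r * ε)) :=
        prod_le_prod (fun j _ => integral_nonneg fun x => Real.exp_nonneg _)
          fun j _ => integral_exp_neg_le hM (hσ j) (hmean j)
      _ = Real.exp (-(2 * (r * ε / 2 * n))) := by
        rw [prod_const, card_univ, Fintype.card_fin, ← Real.exp_nat_mul]
        ring_nf
  have hcurv : M ^ 2 * ∫ s, 1 / (1 + s) ^ 2 ∂sumLaw σ ≤ c / (1 + n * M + M) :=
    (mul_le_mul_of_nonneg_left (integral_one_div_one_add_sq_le hsum (by positivity) hexp)
      (sq_nonneg M)).trans hlarge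
  exact ⟨monotoneOn_expectedLog hsum, expectedLog_le_chord hsum hc hcurv⟩

lemma le_of_forall_le_update {ι α β : Type*} [Finite ι] [DecidableEq ι] [Preorder β]
    {V : (ι → α) → β} {S : Set α} {μ ν : ι → α} (hμ : ∀ j, μ j ∈ S) (hν : ∀ j, ν j ∈ S)
    (hstep : ∀ i ρ, (∀ j, ρ j ∈ S) → ρ i = μ i → V ρ ≤ V (Function.update ρ i (ν i))) :
    V μ ≤ V ν := by
  cases nonempty_fintype ι
  have hybrid (s : Finset ι) : V μ ≤ V (s.piecewise ν μ) := by
    induction s using Finset.induction_on with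
    | empty => simp
    | insert i s his ih =>
      rw [piecewise_insert]
      exact ih.trans <| hstep i _ (fun j => by by_cases hj : j ∈ s <;> simp [hj, hμ, hν])
        (piecewise_eq_of_notMem _ _ _ his)
  simpa using hybrid univ

lemma expectedLog_sumLaw_le_of_integral_le_log {M : ℝ} {μ ν : Fin (n + 1) → Measure ℝ}
    (hμ : ∀ i, IsBoundedLaw M (μ i)) (hν : ∀ i, IsBoundedLaw M (ν i))
    (hle : ∀ i, ν i = μ i ∨ ∫ x, x ∂μ i ≤ ∫ x, Real.log (1 + x) ∂ν i) :
    expectedLog (sumLaw μ) 0 ≤ expectedLog (sumLaw ν) 0 := by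
  refine le_of_forall_le_update (V := fun ρ => expectedLog (sumLaw ρ) 0)
    (S := {ρ | IsBoundedLaw M ρ}) hμ hν fun i ρ hρ hi => ?_
  refine expectedLog_sumLaw_le_update hρ i (hν i) ?_
  rw [hi]
  rcases hle i with heq | hlog
  · rw [heq]
  · exact integral_expectedLog_le_of_integral_le_log
      (IsBoundedLaw.sumLaw fun j => hρ (i.succAbove j)) (hμ i) (hν i) hlog

lemma expectedLog_sumLaw_le_of_utilityLE {M c ε : ℝ} {μ ν : Fin (n + 1) → Measure ℝ}
    (hM : 0 < M) (hc : 0 ≤ c) (hε : 0 < ε) (hn : 0 < n)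
    (hlarge : M ^ 2 * (3 / ((1 - Real.exp (-M)) / M * ε / 2 * n) ^ 2) ≤ c / (1 + n * M + M))
    (hμ : ∀ i, IsBoundedLaw M (μ i)) (hν : ∀ i, IsBoundedLaw M (ν i))
    (hμε : ∀ i, ε ≤ ∫ x, x ∂μ i) (hνε : ∀ i, ε ≤ ∫ x, x ∂ν i)
    (hle : ∀ i, UtilityLE M c (μ i) (ν i)) :
    expectedLog (sumLaw μ) 0 ≤ expectedLog (sumLaw ν) 0 := by
  refine le_of_forall_le_update (V := fun ρ => expectedLog (sumLaw ρ) 0)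
    (S := {ρ | IsBoundedLaw M ρ ∧ ε ≤ ∫ x, x ∂ρ}) (fun i => ⟨hμ i, hμε i⟩)
    (fun i => ⟨hν i, hνε i⟩) fun i ρ hρ hi => ?_
  refine expectedLog_sumLaw_le_update (fun j => (hρ j).1) i (hν i) ?_
  rw [hi]
  exact hle i _ (isUtility_expectedLog_sumLaw hM hc hε hn (fun j => (hρ _).1) (fun j => (hρ _).2)
    hlarge)

theorem exists_forall_expectedLog_sumLaw_le {M c ε : ℝ} (hM : 0 < M) (hc : 0 < c) (hε : 0 < ε) :
    ∃ Nstar : ℕ, 0 < Nstar ∧ ∀ n : ℕ, Nstar ≤ n → ∀ μ ν : Fin n → Measure ℝ,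
      (∀ i, IsBoundedLaw M (μ i)) → (∀ i, IsBoundedLaw M (ν i)) →
      (∀ i, ε ≤ ∫ x, Real.log (1 + x) ∂ν i) → (∀ i, UtilityLE M c (μ i) (ν i)) →
      expectedLog (sumLaw μ) 0 ≤ expectedLog (sumLaw ν) 0 := by
  have hr : 0 < (1 - Real.exp (-M)) / M := div_pos (by simpa using hM) hM
  obtain ⟨m₀, hm₀, hlarge⟩ :=
    exists_forall_inv_sq_le_inv hM hc (θ := (1 - Real.exp (-M)) / M * ε / 2) (by positivity)
  refine ⟨m₀ + 1, m₀.succ_pos, fun n hn μ ν hμ hν hlog hle => ?_⟩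
  obtain ⟨m, rfl⟩ : ∃ m, n = m + 1 := ⟨n - 1, by omega⟩
  have hm : m₀ ≤ m := by omega
  have hνε (i) : ε ≤ ∫ x, x ∂ν i := (hlog i).trans <|
    (hν i).integral_mono (by simpa using integrable_log_one_add_add (hν i) le_rfl)
      (hν i).integrable_id fun x hx => by
        linarith [Real.log_le_sub_one_of_pos (show 0 < 1 + x by linarith [hx.1])]
  have replacement (i) : ∃ ρ, IsBoundedLaw M ρ ∧ ε ≤ ∫ x, x ∂ρ ∧ UtilityLE M c ρ (ν i) ∧
      (ρ = μ i ∨ ∫ x, x ∂μ i ≤ ∫ x, Real.log (1 + x) ∂ρ) := by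
    rcases le_total (∫ x, x ∂μ i) ε with weak | strong
    · exact ⟨ν i, hν i, hνε i, fun _ _ => le_rfl, .inr (weak.trans (hlog i))⟩
    · exact ⟨μ i, hμ i, strong, hle i, .inl rfl⟩
  choose ρ hρ hρε hρν hμρ using replacement
  exact (expectedLog_sumLaw_le_of_integral_le_log hμ hρ hμρ).trans
    (expectedLog_sumLaw_le_of_utilityLE hM hc.le hε (hm₀.trans_le hm) (hlarge m hm) hρ hν hρε hνε
      hρν)

end Exchange

/-- The mixture of the laws `μ k` with weights `p k`; a negative weight counts as `0`. -/
noncomputable def mixture {ι α : Type*} [Fintype ι] [MeasurableSpace α] (p : ι → ℝ)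
    (μ : ι → Measure α) : Measure α :=
  ∑ k, ENNReal.ofReal (p k) • μ k

section Mixture

variable {ι α β : Type*} [Fintype ι] [MeasurableSpace α] [MeasurableSpace β] {p : ι → ℝ}
  {μ : ι → Measure α}

instance [∀ k, IsFiniteMeasure (μ k)] : IsFiniteMeasure (mixture p μ) := by
  have := fun k => Measure.smul_finite (μ k) (ENNReal.ofReal_ne_top (r := p k))
  exact inferInstanceAs (IsFiniteMeasure (∑ k, ENNReal.ofReal (p k) • μ k))

lemma integral_mixture {f : α → ℝ} (hp : ∀ k, 0 ≤ p k) (hf : ∀ k, Integrable f (μ k)) :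
    ∫ x, f x ∂mixture p μ = ∑ k, p k * ∫ x, f x ∂μ k := by
  rw [mixture, integral_finsetSum_measure fun k _ => (hf k).smul_measure ENNReal.ofReal_ne_top]
  simp [integral_smul_measure, ENNReal.toReal_ofReal (hp _)]

lemma map_mixture {f : α → β} (hf : Measurable f) :
    (mixture p μ).map f = mixture p fun k => (μ k).map f := by
  ext s hs
  simp [mixture, Measure.map_apply hf hs, Measure.finsetSum_apply]

lemma IsBoundedLaw.mixture {M : ℝ} {μ : ι → Measure ℝ} (hp : p ∈ stdSimplex ℝ ι)
    (hμ : ∀ k, IsBoundedLaw M (μ k)) : IsBoundedLaw M (mixture p μ) where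
  measure_univ := by
    have := fun k => (hμ k).toIsProbabilityMeasure
    simp [_root_.mixture, Measure.finsetSum_apply, ← ENNReal.ofReal_sum_of_nonneg fun k _ => hp.1 k,
      hp.2]
  ae_mem := ae_finsetSum_measure_iff.2 fun k _ => Measure.ae_smul_measure (hμ k).ae_mem _

lemma pi_mixture {κ : Type*} [Fintype κ] [DecidableEq κ] {p : κ → ι → ℝ} {μ : κ → ι → Measure α}
    [∀ i k, IsFiniteMeasure (μ i k)] (hp : ∀ i k, 0 ≤ p i k) :
    Measure.pi (fun i => mixture (p i) (μ i)) =
      mixture (fun σ : κ → ι => ∏ i, p i (σ i)) fun σ => Measure.pi fun i => μ i (σ i) := by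
  refine Measure.pi_eq fun s _ => ?_
  simp only [mixture, Measure.finsetSum_apply, Measure.smul_apply, smul_eq_mul, Measure.pi_pi,
    ENNReal.ofReal_prod_of_nonneg fun i _ => hp i _, ← prod_mul_distrib]
  rw [prod_univ_sum, Fintype.piFinset_univ]

lemma sumLaw_mixture {κ : Type*} [Fintype κ] [DecidableEq κ] {p : κ → ι → ℝ}
    {μ : κ → ι → Measure ℝ} [∀ i k, IsFiniteMeasure (μ i k)] (hp : ∀ i k, 0 ≤ p i k) :
    sumLaw (fun i => mixture (p i) (μ i)) =
      mixture (fun σ : κ → ι => ∏ i, p i (σ i)) fun σ => sumLaw fun i => μ i (σ i) := by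
  rw [sumLaw, pi_mixture hp, map_mixture (by fun_prop)]
  rfl

lemma aemeasurable_sum_pi {κ : Type*} [Fintype κ] {μ : κ → Measure ℝ} [∀ i, SigmaFinite (μ i)]
    {f : κ → ℝ → ℝ} (hf : ∀ i, AEMeasurable (f i) (μ i)) :
    AEMeasurable (fun g => ∑ i, f i (g i)) (Measure.pi μ) :=
  aemeasurable_fun_sum _ fun i _ =>
    (hf i).comp_quasiMeasurePreserving (Measure.quasiMeasurePreserving_eval μ i)

lemma sumLaw_map {κ : Type*} [Fintype κ] {μ : κ → Measure ℝ} [∀ i, IsProbabilityMeasure (μ i)]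
    {f : κ → ℝ → ℝ} (hf : ∀ i, AEMeasurable (f i) (μ i)) :
    sumLaw (fun i => (μ i).map (f i)) = (Measure.pi μ).map fun g => ∑ i, f i (g i) := by
  have := fun i => Measure.isProbabilityMeasure_map (hf i)
  rw [sumLaw, ← Measure.pi_map_pi hf, AEMeasurable.map_map_of_aemeasurable (by fun_prop)]
  · rfl
  · exact aemeasurable_pi_iff.2 fun i =>
      (hf i).comp_quasiMeasurePreserving (Measure.quasiMeasurePreserving_eval μ i)

end Mixture

/-- The law of the received entropy power `N k g` when the channel state `k` has probability `p k`
and the transmit power `g` has law `F k` given `k`. -/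
noncomputable def receivedLaw {ι : Type*} [Fintype ι] (N : ι → ℝ → ℝ) (p : ι → ℝ)
    (F : ι → Measure ℝ) : Measure ℝ :=
  mixture p fun k => (F k).map (N k)

/-- The entropy-power-inequality bound on the sum rate of the policies `F i` of users with channel
statistics `π i`. -/
noncomputable def objective {ι κ : Type*} [Fintype ι] [Fintype κ] [DecidableEq κ] (N : ι → ℝ → ℝ)
    (π : κ → ι → ℝ) (F : κ → ι → Measure ℝ) : ℝ :=
  ∑ σ : κ → ι, (∏ i, π i (σ i)) *
    ∫ g : κ → ℝ, (1 / 2) * Real.log (1 + ∑ i, N (σ i) (g i)) ∂(Measure.pi fun i => F i (σ i))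

/-- `F` is a power allocation policy with peak power `G` whose average power under the channel
statistics `p` is at most `B`. -/
structure IsFeasible {ι : Type*} [Fintype ι] (p : ι → ℝ) (G B : ℝ) (F : ι → Measure ℝ) :
    Prop where
  isBoundedLaw : ∀ k, IsBoundedLaw G (F k)
  sum_le : ∑ k, p k * ∫ g, g ∂F k ≤ B

/-- `N k g` behaves like the entropy power received from power `g ∈ [0, G]` in channel state `k`:
in each state it is convex in `g`, and either zero or not linear. -/
structure IsEntropyPower {ι : Type*} [LE ι] (G : ℝ) (N : ι → ℝ → ℝ) : Prop where
  nonneg : ∀ k, ∀ g ∈ Set.Icc 0 G, 0 ≤ N k g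
  map_zero : ∀ k, N k 0 = 0
  convexOn : ∀ k, ConvexOn ℝ (Set.Icc 0 G) (N k)
  half_lt : ∀ k, N k G ≠ 0 → N k (G / 2) < N k G / 2
  apply_le_apply : ∀ k k', k ≤ k' → N k G ≤ N k' G

namespace IsEntropyPower

variable {ι : Type*} [LE ι] {G M c : ℝ} {N : ι → ℝ → ℝ} {k : ι}

lemma monotoneOn (hN : IsEntropyPower G N) (k : ι) : MonotoneOn (N k) (Set.Icc 0 G) :=
  monotoneOn_of_convexOn_of_nonneg (hN.convexOn k) (hN.map_zero k) (hN.nonneg k)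

lemma apply_nonneg (hN : IsEntropyPower G N) (hG : 0 ≤ G) (k : ι) : 0 ≤ N k G :=
  hN.nonneg k G (Set.right_mem_Icc.2 hG)

lemma mapsTo (hN : IsEntropyPower G N) (hM : N k G ≤ M) :
    Set.MapsTo (N k) (Set.Icc 0 G) (Set.Icc 0 M) := fun g hg =>
  ⟨hN.nonneg k g hg,
    (hN.monotoneOn k hg (Set.right_mem_Icc.2 (hg.1.trans hg.2)) hg.2).trans hM⟩

lemma isBoundedLaw_map (hN : IsEntropyPower G N) (hM : N k G ≤ M) {μ : Measure ℝ}
    (hμ : IsBoundedLaw G μ) : IsBoundedLaw M (μ.map (N k)) :=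
  hμ.map (hμ.aemeasurable_of_monotoneOn (hN.monotoneOn k)) (hN.mapsTo hM)

lemma le_add_div_mul_sub (hN : IsEntropyPower G N) (hG : 0 < G) (hM : N k G ≤ M)
    (hc : N k G ≠ 0 → c ≤ N k G - 2 * N k (G / 2)) {Φ : ℝ → ℝ} (hΦ : IsUtility M c Φ) {g : ℝ}
    (hg : g ∈ Set.Icc 0 G) : Φ (N k g) ≤ Φ 0 + g / G * (Φ (N k G) - Φ 0) := by
  have hg0 := hN.nonneg k g hg
  by_cases hk : N k G = 0
  · have : N k g = 0 := le_antisymm (hN.mapsTo hk.le hg).2 hg0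
    simp [this, hk]
  · have ht : g / G ∈ Set.Icc 0 1 := ⟨div_nonneg hg.1 hG.le, div_le_one_of_le₀ hg.2 hG.le⟩
    have hgap := convexOn_apply_mul_le_sub (hN.convexOn k) (hN.map_zero k) hG.le ht
    rw [div_mul_cancel₀ g hG.ne'] at hgap
    have hweight : 0 ≤ g / G * (1 - g / G) := mul_nonneg ht.1 (sub_nonneg.2 ht.2)
    have hchord := hΦ.le_chord ht hg0 ⟨hN.apply_nonneg hG.le k, hM⟩
      (hgap.trans (by gcongr; exact hc hk))
    linear_combination hchord

lemma integral_comp_le (hN : IsEntropyPower G N) (hG : 0 < G) (hM : N k G ≤ M)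
    (hc : N k G ≠ 0 → c ≤ N k G - 2 * N k (G / 2)) {Φ : ℝ → ℝ}
    (hΦ : IsUtility M c Φ) {μ : Measure ℝ} (hμ : IsBoundedLaw G μ) :
    ∫ g, Φ (N k g) ∂μ ≤ Φ 0 + (∫ g, g ∂μ) / G * (Φ (N k G) - Φ 0) := by
  have := hμ.toIsProbabilityMeasure
  have hmono : MonotoneOn (fun g => Φ (N k g)) (Set.Icc 0 G) :=
    hΦ.monotoneOn.comp (hN.monotoneOn k) fun g hg => hN.nonneg k g hg
  have hchord : Integrable (fun g => g / G * (Φ (N k G) - Φ 0)) μ :=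
    (hμ.integrable_id.div_const G).mul_const _
  calc ∫ g, Φ (N k g) ∂μ ≤ ∫ g, Φ 0 + g / G * (Φ (N k G) - Φ 0) ∂μ :=
        hμ.integral_mono (hμ.integrable_of_monotoneOn hmono) ((integrable_const _).add hchord)
          fun g hg => hN.le_add_div_mul_sub hG hM hc hΦ hg
    _ = Φ 0 + (∫ g, g ∂μ) / G * (Φ (N k G) - Φ 0) := by
        rw [integral_add (integrable_const _) hchord, integral_mul_const, integral_div]
        simp

end IsEntropyPower

section ReceivedLaw

variable {ι : Type*} [Fintype ι] [LE ι] {G M : ℝ} {N : ι → ℝ → ℝ} {p : ι → ℝ}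
  {F : ι → Measure ℝ}

lemma isBoundedLaw_receivedLaw (hN : IsEntropyPower G N) (hM : ∀ k, N k G ≤ M)
    (hp : p ∈ stdSimplex ℝ ι) (hF : ∀ k, IsBoundedLaw G (F k)) :
    IsBoundedLaw M (receivedLaw N p F) :=
  .mixture hp fun k => hN.isBoundedLaw_map (hM k) (hF k)

lemma integral_receivedLaw (hN : IsEntropyPower G N) (hp : ∀ k, 0 ≤ p k)
    (hF : ∀ k, IsBoundedLaw G (F k)) {Φ : ℝ → ℝ} (hΦ : MonotoneOn Φ (Set.Ici 0)) :
    ∫ x, Φ x ∂receivedLaw N p F = ∑ k, p k * ∫ g, Φ (N k g) ∂F k := by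
  have hint (k) : Integrable Φ ((F k).map (N k)) :=
    (hN.isBoundedLaw_map le_rfl (hF k)).integrable_of_monotoneOn
      (hΦ.mono Set.Icc_subset_Ici_self)
  rw [receivedLaw, integral_mixture hp hint]
  refine sum_congr rfl fun k _ => ?_
  rw [integral_map ((hF k).aemeasurable_of_monotoneOn (hN.monotoneOn k)) (hint k).1]

lemma objective_eq_expectedLog {κ : Type*} [Fintype κ] [DecidableEq κ] {π : κ → ι → ℝ}
    {F : κ → ι → Measure ℝ} (hN : IsEntropyPower G N) (hM : ∀ k, N k G ≤ M)
    (hπ : ∀ i k, 0 ≤ π i k) (hF : ∀ i k, IsBoundedLaw G (F i k)) :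
    objective N π F = 1 / 2 * expectedLog (sumLaw fun i => receivedLaw N (π i) (F i)) 0 := by
  have := fun i k => (hF i k).toIsProbabilityMeasure
  have hmeas (i k) : AEMeasurable (N k) (F i k) :=
    (hF i k).aemeasurable_of_monotoneOn (hN.monotoneOn k)
  have hmap (i k) : IsBoundedLaw M ((F i k).map (N k)) := hN.isBoundedLaw_map (hM k) (hF i k)
  have := fun i k => (hmap i k).toIsProbabilityMeasure
  have hlog (σ : κ → ι) : Integrable (fun s => Real.log (1 + 0 + s))
      (sumLaw fun i => (F i (σ i)).map (N (σ i))) :=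
    integrable_log_one_add_add (.sumLaw fun i => hmap i (σ i)) le_rfl
  simp only [receivedLaw]
  rw [sumLaw_mixture hπ, expectedLog,
    integral_mixture (fun σ => prod_nonneg fun i _ => hπ i (σ i)) hlog, objective, mul_sum]
  refine sum_congr rfl fun σ _ => ?_
  rw [sumLaw_map fun i => hmeas i (σ i), integral_map (aemeasurable_sum_pi fun i => hmeas i (σ i))
    (Measurable.log (by fun_prop)).aestronglyMeasurable, integral_const_mul]
  simp only [add_zero]
  ring

end ReceivedLaw

/-- The on/off power law: full power `G` with probability `w`, silence otherwise. -/
noncomputable def onOff (G w : ℝ) : Measure ℝ :=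
  ENNReal.ofReal w • Measure.dirac G + ENNReal.ofReal (1 - w) • Measure.dirac 0

lemma isBoundedLaw_onOff {G w : ℝ} (hG : 0 ≤ G) (hw : w ∈ Set.Icc 0 1) :
    IsBoundedLaw G (onOff G w) where
  measure_univ := by
    simp [onOff, ← ENNReal.ofReal_add hw.1 (sub_nonneg.2 hw.2)]
  ae_mem := by
    refine ae_add_measure_iff.2 ⟨Measure.ae_smul_measure ?_ _, Measure.ae_smul_measure ?_ _⟩ <;>
      simp [ae_dirac_eq, hG]

lemma integral_onOff {G w : ℝ} (hw : w ∈ Set.Icc 0 1) (f : ℝ → ℝ) :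
    ∫ g, f g ∂onOff G w = f 0 + w * (f G - f 0) := by
  have hint (a r : ℝ) : Integrable f (ENNReal.ofReal r • Measure.dirac a) :=
    (integrable_dirac (by simp)).smul_measure ENNReal.ofReal_ne_top
  rw [onOff, integral_add_measure (hint _ _) (hint _ _), integral_smul_measure,
    integral_smul_measure, integral_dirac, integral_dirac, ENNReal.toReal_ofReal hw.1,
    ENNReal.toReal_ofReal (sub_nonneg.2 hw.2), smul_eq_mul, smul_eq_mul]
  ring

section Threshold

variable {ι : Type*} [Fintype ι] [LinearOrder ι]

/-- The probabilities `w k` of transmitting in state `k` are the greedy solution of a fractional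
knapsack problem: they fill the states from the top down to the threshold `τ`, for a total
probability `b` of transmitting under the channel statistics `p`. -/
structure IsThresholdRule (p : ι → ℝ) (b : ℝ) (τ : ι) (w : ι → ℝ) : Prop where
  mem_Icc : ∀ k, w k ∈ Set.Icc 0 1
  eq_one : ∀ k, τ < k → w k = 1
  eq_zero : ∀ k, k < τ → w k = 0
  sum_eq : ∑ k, p k * w k = b

/-- The probabilities of transmitting under the threshold `τ` that exhaust the budget `B` with
peak power `G`. -/
noncomputable def thresholdProb (p : ι → ℝ) (G B : ℝ) (τ k : ι) : ℝ :=
  if τ < k then 1 else if k < τ then 0 else (B - G * ∑ k with τ < k, p k) / (G * p τ)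

variable {p w : ι → ℝ} {b B G : ℝ} {τ : ι}

lemma IsThresholdRule.sum_mul_le (hw : IsThresholdRule p b τ w) (hp : ∀ k, 0 ≤ p k) {m d : ι → ℝ}
    (hm : ∀ k, m k ∈ Set.Icc 0 1) (hmb : ∑ k, p k * m k ≤ b) (hdτ : 0 ≤ d τ) (hd : Monotone d) :
    ∑ k, p k * (m k * d k) ≤ ∑ k, p k * (w k * d k) := by
  have hterm (k) : p k * (m k * (d k - d τ)) ≤ p k * (w k * (d k - d τ)) := by
    refine mul_le_mul_of_nonneg_left ?_ (hp k)
    rcases lt_trichotomy k τ with hk | rfl | hk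
    · rw [hw.eq_zero k hk, zero_mul]
      exact mul_nonpos_of_nonneg_of_nonpos (hm k).1 (sub_nonpos.2 (hd hk.le))
    · simp
    · rw [hw.eq_one k hk]
      exact mul_le_mul_of_nonneg_right (hm k).2 (sub_nonneg.2 (hd hk.le))
  have hsplit (v : ι → ℝ) :
      ∑ k, p k * (v k * d k) = ∑ k, p k * (v k * (d k - d τ)) + (∑ k, p k * v k) * d τ := by
    rw [sum_mul, ← sum_add_distrib]
    exact sum_congr rfl fun k _ => by ring
  rw [hsplit, hsplit, hw.sum_eq]
  exact add_le_add (sum_le_sum fun k _ => hterm k) (mul_le_mul_of_nonneg_right hmb hdτ)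

lemma IsThresholdRule.apply_ne_zero {N : ι → ℝ → ℝ} (hw : IsThresholdRule p b τ w)
    (hp : ∀ k, 0 ≤ p k) (hN : IsEntropyPower G N) (hG : 0 ≤ G)
    (hb : b < ∑ k with N k G ≠ 0, p k) : N τ G ≠ 0 := by
  intro hτ
  refine hb.not_ge ?_
  calc ∑ k with N k G ≠ 0, p k = ∑ k with N k G ≠ 0, p k * w k := by
        refine sum_congr rfl fun k hk => ?_
        have hτk : τ < k := by
          by_contra! hkτ
          exact (mem_filter.1 hk).2
            (le_antisymm (hτ ▸ hN.apply_le_apply k τ hkτ) (hN.apply_nonneg hG k))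
        rw [hw.eq_one k hτk, mul_one]
    _ ≤ ∑ k, p k * w k :=
        sum_le_univ_sum_of_nonneg fun k => mul_nonneg (hp k) (hw.mem_Icc k).1
    _ = b := hw.sum_eq

lemma isThresholdRule_thresholdProb (hG : 0 < G) (hlow : G * ∑ k with τ < k, p k ≤ B)
    (hhigh : B < G * ∑ k with τ ≤ k, p k) :
    IsThresholdRule p (B / G) τ (thresholdProb p G B τ) := by
  have hsplit : ∑ k with τ ≤ k, p k = p τ + ∑ k with τ < k, p k := by
    rw [← sum_insert (by simp)]
    congr 1
    ext k
    simp [le_iff_eq_or_lt, eq_comm]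
  rw [hsplit] at hhigh
  have hpos : 0 < G * p τ := by linarith
  refine ⟨fun k => ?_, fun k hk => by simp [thresholdProb, hk],
    fun k hk => by simp [thresholdProb, hk, hk.not_gt], ?_⟩
  · unfold thresholdProb
    split_ifs
    exacts [by simp, by simp,
      ⟨div_nonneg (by linarith) hpos.le, div_le_one_of_le₀ (by linarith) hpos.le⟩]
  · have hterm (k) : p k * thresholdProb p G B τ k =
        (if τ < k then p k else 0) + if k = τ then p τ * thresholdProb p G B τ τ else 0 := by
      rcases lt_trichotomy k τ with hk | rfl | hk
      · simp [thresholdProb, hk, hk.not_gt, hk.ne]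
      · simp
      · simp [thresholdProb, hk, hk.ne']
    have hp : p τ ≠ 0 := right_ne_zero_of_mul hpos.ne'
    rw [sum_congr rfl fun k _ => hterm k, sum_add_distrib, ← sum_filter, sum_ite_eq' univ τ,
      if_pos (mem_univ τ)]
    simp only [thresholdProb, lt_irrefl, if_false]
    field_simp
    ring

lemma eq_onOff_thresholdProb {F : ι → Measure ℝ} (habove : ∀ k, τ < k → F k = Measure.dirac G)
    (hbelow : ∀ k, k < τ → F k = Measure.dirac 0)
    (hthreshold : F τ = onOff G ((B - G * ∑ k with τ < k, p k) / (G * p τ))) (k : ι) :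
    F k = onOff G (thresholdProb p G B τ k) := by
  rcases lt_trichotomy k τ with hk | rfl | hk
  · simp [hbelow k hk, thresholdProb, onOff, hk, hk.not_gt]
  · simp [hthreshold, thresholdProb]
  · simp [habove k hk, thresholdProb, onOff, hk]

variable {M c : ℝ} {N : ι → ℝ → ℝ}

lemma integral_receivedLaw_onOff (hN : IsEntropyPower G N) (hG : 0 ≤ G) (hp : p ∈ stdSimplex ℝ ι)
    (hw : ∀ k, w k ∈ Set.Icc 0 1) {Φ : ℝ → ℝ} (hΦ : MonotoneOn Φ (Set.Ici 0)) :
    ∫ x, Φ x ∂receivedLaw N p (fun k => onOff G (w k)) =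
      Φ 0 + ∑ k, p k * (w k * (Φ (N k G) - Φ 0)) := by
  rw [integral_receivedLaw hN hp.1 (fun k => isBoundedLaw_onOff hG (hw k)) hΦ]
  simp only [fun k => integral_onOff (G := G) (hw k) (fun g => Φ (N k g)), hN.map_zero, mul_add,
    sum_add_distrib, ← sum_mul, hp.2, one_mul]

lemma utilityLE_receivedLaw (hN : IsEntropyPower G N) (hG : 0 < G) (hM : ∀ k, N k G ≤ M)
    (hc : ∀ k, N k G ≠ 0 → c ≤ N k G - 2 * N k (G / 2)) (hp : p ∈ stdSimplex ℝ ι)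
    {F : ι → Measure ℝ} (hF : IsFeasible p G B F) (hw : IsThresholdRule p (B / G) τ w) :
    UtilityLE M c (receivedLaw N p F) (receivedLaw N p fun k => onOff G (w k)) := by
  intro Φ hΦ
  have hd {x : ℝ} (k) (hx : 0 ≤ x) (hle : x ≤ N k G) : Φ x ≤ Φ (N k G) :=
    hΦ.monotoneOn hx (hN.apply_nonneg hG.le k) hle
  rw [integral_receivedLaw hN hp.1 hF.isBoundedLaw hΦ.monotoneOn,
    integral_receivedLaw_onOff hN hG.le hp hw.mem_Icc hΦ.monotoneOn]
  set m : ι → ℝ := fun k => (∫ g, g ∂F k) / G with hm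
  have hmean : ∑ k, p k * m k ≤ B / G := by
    simp only [hm, ← mul_div_assoc, ← sum_div]
    exact div_le_div_of_nonneg_right hF.sum_le hG.le
  calc ∑ k, p k * ∫ g, Φ (N k g) ∂F k
      ≤ ∑ k, p k * (Φ 0 + m k * (Φ (N k G) - Φ 0)) :=
        sum_le_sum fun k _ => mul_le_mul_of_nonneg_left
          (hN.integral_comp_le hG (hM k) (hc k) hΦ (hF.isBoundedLaw k)) (hp.1 k)
    _ = Φ 0 + ∑ k, p k * (m k * (Φ (N k G) - Φ 0)) := by
        simp only [mul_add, sum_add_distrib, ← sum_mul, hp.2, one_mul]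
    _ ≤ Φ 0 + ∑ k, p k * (w k * (Φ (N k G) - Φ 0)) := by
        refine (add_le_add_iff_left _).2 <| hw.sum_mul_le hp.1
          (fun k => (hF.isBoundedLaw k).integral_div_mem_Icc hG) hmean
          (sub_nonneg.2 (hd τ le_rfl (hN.apply_nonneg hG.le τ))) fun k k' hk => ?_
        exact sub_le_sub_right (hd k' (hN.apply_nonneg hG.le k) (hN.apply_le_apply k k' hk)) _

lemma mul_le_integral_log_receivedLaw {δ : ℝ} (hN : IsEntropyPower G N) (hG : 0 ≤ G)
    (hp : p ∈ stdSimplex ℝ ι) (hw : IsThresholdRule p b τ w) (hτ : N τ G ≠ 0)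
    (hδ : ∀ k, N k G ≠ 0 → δ ≤ Real.log (1 + N k G)) :
    b * δ ≤ ∫ x, Real.log (1 + x) ∂receivedLaw N p fun k => onOff G (w k) := by
  have hlog : MonotoneOn (fun x : ℝ => Real.log (1 + x)) (Set.Ici 0) := fun x hx y _ hxy =>
    Real.log_le_log (by linarith [Set.mem_Ici.1 hx]) (by linarith)
  have hterm (k) : w k * δ ≤ w k * Real.log (1 + N k G) := by
    rcases lt_or_ge k τ with hk | hk
    · simp [hw.eq_zero k hk]
    · have hNk : 0 < N k G :=
        ((hN.apply_nonneg hG τ).lt_of_ne' hτ).trans_le (hN.apply_le_apply τ k hk)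
      exact mul_le_mul_of_nonneg_left (hδ k hNk.ne') (hw.mem_Icc k).1
  rw [integral_receivedLaw_onOff hN hG hp hw.mem_Icc hlog, ← hw.sum_eq, sum_mul]
  simp only [add_zero, Real.log_one, zero_add, sub_zero, mul_assoc]
  exact sum_le_sum fun k _ => mul_le_mul_of_nonneg_left (hterm k) (hp.1 k)

end Threshold

theorem invariant_policy_exists_general {ι : Type*} [Fintype ι] [LinearOrder ι] {gmin gmax : ℝ}
    (hgmin : 0 < gmin) (hgmax : 0 < gmax) {N : ι → ℝ → ℝ} (hN : IsEntropyPower gmax N) :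
    ∃ Nstar : ℕ, 0 < Nstar ∧ ∀ n : ℕ, Nstar ≤ n →
      ∀ (π : Fin n → ι → ℝ) (Gbar : Fin n → ℝ) (τ : Fin n → ι) (w : Fin n → ι → ℝ),
        (∀ i, π i ∈ stdSimplex ℝ ι) → (∀ i, gmin ≤ Gbar i) →
        (∀ i, Gbar i < gmax * ∑ k with N k gmax ≠ 0, π i k) →
        (∀ i, IsThresholdRule (π i) (Gbar i / gmax) (τ i) (w i)) →
        ∀ F : Fin n → ι → Measure ℝ, (∀ i, IsFeasible (π i) gmax (Gbar i) (F i)) →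
          objective N π F ≤ objective N π fun i k => onOff gmax (w i k) := by
  set M := 1 + ∑ k, N k gmax
  have hNnonneg := hN.apply_nonneg hgmax.le
  have hM (k) : N k gmax ≤ M :=
    (single_le_sum (fun j _ => hNnonneg j) (mem_univ k)).trans (le_add_of_nonneg_left one_pos.le)
  have hM0 : 0 < M := add_pos_of_pos_of_nonneg one_pos (sum_nonneg fun k _ => hNnonneg k)
  obtain ⟨c, hc, hcgap⟩ :=
    exists_pos_forall_le (f := fun k => N k gmax - 2 * N k (gmax / 2)) fun k hk => by
      linarith [hN.half_lt k hk]
  obtain ⟨δ, hδ, hδlog⟩ :=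
    exists_pos_forall_le (f := fun k => Real.log (1 + N k gmax)) fun k hk =>
      Real.log_pos (lt_add_of_pos_right 1 ((hNnonneg k).lt_of_ne' hk))
  obtain ⟨Nstar, hpos, hopt⟩ :=
    exists_forall_expectedLog_sumLaw_le hM0 hc (mul_pos (div_pos hgmin hgmax) hδ)
  refine ⟨Nstar, hpos, fun n hn π Gbar τ w hπ hGbar hbudget hw F hF => ?_⟩
  have honOff (i k) : IsBoundedLaw gmax (onOff gmax (w i k)) :=
    isBoundedLaw_onOff hgmax.le ((hw i).mem_Icc k)
  rw [objective_eq_expectedLog hN hM (fun i => (hπ i).1) fun i => (hF i).isBoundedLaw,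
    objective_eq_expectedLog hN hM (fun i => (hπ i).1) honOff]
  refine mul_le_mul_of_nonneg_left (hopt n hn _ _
    (fun i => isBoundedLaw_receivedLaw hN hM (hπ i) (hF i).isBoundedLaw)
    (fun i => isBoundedLaw_receivedLaw hN hM (hπ i) (honOff i)) (fun i => ?_)
    fun i => utilityLE_receivedLaw hN hgmax hM hcgap (hπ i) (hF i) (hw i)) one_half_pos.le
  have hτ : N (τ i) gmax ≠ 0 :=
    (hw i).apply_ne_zero (hπ i).1 hN hgmax.le ((div_lt_iff₀' hgmax).2 (hbudget i))
  calc gmin / gmax * δ ≤ Gbar i / gmax * δ := by gcongr; exact hGbar i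
    _ ≤ _ := mul_le_integral_log_receivedLaw hN hgmax.le (hπ i) (hw i) hτ hδlog

lemma isEntropyPower_of_strictConvexOn {ι : Type*} [LE ι] {G : ℝ} (hG : 0 < G) {N : ι → ℝ → ℝ}
    {q : ι → Prop} (hnonneg : ∀ k, ∀ g ∈ Set.Icc 0 G, 0 ≤ N k g) (hzero : ∀ k, N k 0 = 0)
    (hq : ∀ k, ¬ q k → ∀ g, N k g = 0) (hconv : ∀ k, q k → StrictConvexOn ℝ (Set.Icc 0 G) (N k))
    (hle : ∀ k k', k ≤ k' → N k G ≤ N k' G) : IsEntropyPower G N where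
  nonneg := hnonneg
  map_zero := hzero
  convexOn k := by
    by_cases hk : q k
    · exact (hconv k hk).convexOn
    · rw [show N k = fun _ => 0 from funext (hq k hk)]
      exact convexOn_const 0 (convex_Icc 0 G)
  half_lt k hkG := by
    have hk : q k := by_contra fun hk => hkG (hq k hk G)
    have := (hconv k hk).2 (Set.left_mem_Icc.2 hG.le) (Set.right_mem_Icc.2 hG.le) hG.ne
      one_half_pos one_half_pos (add_halves 1)
    simpa [hzero, ← div_eq_inv_mul] using this
  apply_le_apply := hle

/-- main theorem: existence of an invariant optimal power allocation
policy. Let `0 = h 0 < h 1 < ⋯ < h (K-1)` be the channel gains (`K ≥ 2`),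
`0 < g_min ≤ g_max`, `η ∈ (0,1)`, and let `Nf k g` be the scaled entropy power at
gain `h k` and power `g`, vanishing for `k = 0` or `g = 0`, strictly increasing,
continuous and strictly convex in `g` for `k ≥ 1`, nonnegative, and monotone in `k`.
Then there is `N* > 0`, depending only on `η, g_min, g_max, Nf` (not on the number
of users or their statistics), such that for all `n ≥ N*`, all channel pmfs `π i`
with `π i 0 < 1 - η` and all budgets `Ḡ i` with `g_min ≤ Ḡ i` and
`0 < Ḡ i < g_max · Σ_{k ≥ 1} π i k`, the threshold policy `F*` — Dirac at `g_max`
above the threshold `τ i`, Dirac at `0` below it, and the appropriate two-point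
mixture at `τ i` — maximizes the EPI sum-rate objective
`T(F) = Σ_κ (Π_i π i (κ i)) ∫ (1/2) ln(1 + Σ_i Nf (κ i) (g i)) d(Π_i F i (κ i))`
over all feasible policies, i.e. families of Borel probability measures on
`[0, g_max]` satisfying the per-user average power constraints. -/
theorem invariant_policy_exists
    (K : ℕ) (hK : 2 ≤ K)
    (h : Fin K → ℝ)
    (hh0 : ∀ k : Fin K, k.val = 0 → h k = 0)
    (hhmono : StrictMono h)
    (gmin gmax : ℝ) (hgmin : 0 < gmin) (hgminmax : gmin ≤ gmax)
    (η : ℝ) (hη : η ∈ Set.Ioo (0 : ℝ) 1)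
    (Nf : Fin K → ℝ → ℝ)
    (hNnonneg : ∀ k : Fin K, ∀ g ∈ Set.Icc 0 gmax, 0 ≤ Nf k g)
    (hN0 : ∀ k : Fin K, k.val = 0 → ∀ g : ℝ, Nf k g = 0)
    (hNg0 : ∀ k : Fin K, Nf k 0 = 0)
    (hNmono : ∀ k : Fin K, k.val ≠ 0 → StrictMonoOn (Nf k) (Set.Icc 0 gmax))
    (hNcont : ∀ k : Fin K, k.val ≠ 0 → ContinuousOn (Nf k) (Set.Icc 0 gmax))
    (hNconv : ∀ k : Fin K, k.val ≠ 0 → StrictConvexOn ℝ (Set.Icc 0 gmax) (Nf k))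
    (hNord : ∀ k k' : Fin K, k ≤ k' → ∀ g ∈ Set.Icc 0 gmax, Nf k g ≤ Nf k' g) :
    ∃ Nstar : ℕ, 0 < Nstar ∧
      ∀ n : ℕ, Nstar ≤ n →
      ∀ (π : Fin n → Fin K → ℝ) (Gbar : Fin n → ℝ),
        (∀ i k, 0 ≤ π i k) →
        (∀ i, ∑ k, π i k = 1) →
        (∀ i, ∀ k : Fin K, k.val = 0 → π i k < 1 - η) →
        (∀ i, gmin ≤ Gbar i) →
        (∀ i, 0 < Gbar i) →
        (∀ i, Gbar i < gmax * ∑ k ∈ univ.filter (fun k : Fin K => k.val ≠ 0), π i k) →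
        ∀ τ : Fin n → Fin K,
        (∀ i, gmax * ∑ k ∈ univ.filter (fun k : Fin K => τ i < k), π i k ≤ Gbar i ∧
              Gbar i < gmax * ∑ k ∈ univ.filter (fun k : Fin K => τ i ≤ k), π i k) →
        ∀ Fstar : Fin n → Fin K → ProbabilityMeasure ℝ,
        (∀ i, ∀ k : Fin K, τ i < k → (Fstar i k : Measure ℝ) = Measure.dirac gmax) →
        (∀ i, ∀ k : Fin K, k < τ i → (Fstar i k : Measure ℝ) = Measure.dirac 0) →
        (∀ i, (Fstar i (τ i) : Measure ℝ) =
          ENNReal.ofReal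
              ((Gbar i - gmax * ∑ k ∈ univ.filter (fun k : Fin K => τ i < k), π i k)
                / (gmax * π i (τ i))) • Measure.dirac gmax +
          ENNReal.ofReal
              (1 - (Gbar i - gmax * ∑ k ∈ univ.filter (fun k : Fin K => τ i < k), π i k)
                / (gmax * π i (τ i))) • Measure.dirac 0) →
        ∀ F : Fin n → Fin K → ProbabilityMeasure ℝ,
        (∀ i k, (F i k : Measure ℝ) (Set.Icc 0 gmax) = 1) →
        (∀ i, ∑ k, π i k * ∫ g, g ∂(F i k : Measure ℝ) ≤ Gbar i) →
        (∑ κ : Fin n → Fin K, (∏ i, π i (κ i)) *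
            ∫ g : Fin n → ℝ, (1 / 2) * Real.log (1 + ∑ i, Nf (κ i) (g i))
              ∂(Measure.pi fun i => (F i (κ i) : Measure ℝ)))
          ≤
        (∑ κ : Fin n → Fin K, (∏ i, π i (κ i)) *
            ∫ g : Fin n → ℝ, (1 / 2) * Real.log (1 + ∑ i, Nf (κ i) (g i))
              ∂(Measure.pi fun i => (Fstar i (κ i) : Measure ℝ))) := by
  have hgmax : 0 < gmax := hgmin.trans_le hgminmax
  have hN : IsEntropyPower gmax Nf :=
    isEntropyPower_of_strictConvexOn hgmax (q := fun k => k.val ≠ 0) hNnonneg hNg0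
      (fun k hk => hN0 k (not_not.1 hk)) hNconv
      fun k k' hk => hNord k k' hk gmax (Set.right_mem_Icc.2 hgmax.le)
  have halive (k : Fin K) : Nf k gmax ≠ 0 ↔ k.val ≠ 0 := by
    refine ⟨fun hne hk => hne (hN0 k hk gmax), fun hk => ?_⟩
    have := hNmono k hk (Set.left_mem_Icc.2 hgmax.le) (Set.right_mem_Icc.2 hgmax.le) hgmax
    exact (hNg0 k ▸ this).ne'
  obtain ⟨Nstar, hpos, hopt⟩ := invariant_policy_exists_general hgmin hgmax hN
  refine ⟨Nstar, hpos, fun n hn π Gbar hπ hsum _ hGbar _ hbudget τ hτ Fstar habove hbelow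
    hthreshold F hF hpower => ?_⟩
  have hFstar (i k) : (Fstar i k : Measure ℝ) =
      onOff gmax (thresholdProb (π i) gmax (Gbar i) (τ i) k) :=
    eq_onOff_thresholdProb (habove i) (hbelow i) (hthreshold i) k
  simp only [hFstar]
  exact hopt n hn π Gbar τ (fun i => thresholdProb (π i) gmax (Gbar i) (τ i))
    (fun i => ⟨hπ i, hsum i⟩) hGbar (by simpa only [halive] using hbudget)
    (fun i => isThresholdRule_thresholdProb hgmax (hτ i).1 (hτ i).2)
    (fun i k => (F i k : Measure ℝ))
    fun i => ⟨fun k => ⟨inferInstance, (mem_ae_iff_prob_eq_one measurableSet_Icc).2 (hF i k)⟩,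
      hpower i⟩
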